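/- For every m ∈ [2,∞) and every ζ ∈ (1 + m/2, ∞) there exists a constant C = C(m,ζ) > 0, independent of r, such that for every r ≥ 1 and every continuously differentiable function v : B_r → ℝ whose gradient ∇v belongs to L²(B_r), one has (∫_{B_r} |v(x)|^m (e+|x|²)^{-1} (log(e+|x|²))^{-ζ} dx)^{1/m} ≤ C‖v‖_{L²(B₁)} + C‖∇v‖_{L²(B_r)}. -/

import Mathlib

open MeasureTheory Real Set Metric

noncomputable section

abbrev E2 := EuclideanSpace ℝ (Fin 2)

open scoped ENNReal

/-! The logarithm turns an annulus into a strip of width `2π`, on which the weight becomes `(re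
w)^(-ζ)` while the Dirichlet integral, being conformally invariant, is unchanged; the remaining
small disc is covered by an affine copy of a rectangle. On the strip, `u` at a point `z` differs
from its mean over the vertical slice one unit to the left by at most the convolution of `|∇u|`
with the kernel `1 / re w` on a truncated cone, and by Cauchy–Schwarz these slice means grow at
most like `√(re z)`. The means are integrable against the weight to the power `m` exactly because
`ζ > 1 + m / 2`; the convolution is handled by Young's inequality, which puts it in every `L^q`
with `q ≥ 2`, followed by Hölder's inequality. -/

section Lebesgue

variable {α : Type*} [MeasurableSpace α] {μ : Measure α}

lemma add_rpow_le_two_rpow_mul (a b : ℝ≥0∞) {m : ℝ} (hm : 0 ≤ m) :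
    (a + b) ^ m ≤ 2 ^ m * (a ^ m + b ^ m) := by
  have hmax : a + b ≤ 2 * max a b :=
    (add_le_add (le_max_left a b) (le_max_right a b)).trans_eq (two_mul _).symm
  calc (a + b) ^ m ≤ 2 ^ m * max a b ^ m := by
        rw [← ENNReal.mul_rpow_of_nonneg _ _ hm]; gcongr
    _ ≤ 2 ^ m * (a ^ m + b ^ m) := by
        gcongr
        rcases max_cases a b with ⟨h, -⟩ | ⟨h, -⟩ <;> simp [h]

lemma lintegral_rpow_mul_le {f w : α → ℝ≥0∞} (hf : AEMeasurable f μ) (hw : AEMeasurable w μ)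
    (hw1 : ∀ᵐ x ∂μ, w x ≤ 1) {m q : ℝ} (hm : 0 < m) (hmq : m ≤ q) :
    ∫⁻ x, f x ^ m * w x ∂μ ≤ (∫⁻ x, f x ^ q ∂μ) ^ (m / q) * (∫⁻ x, w x ∂μ) ^ (1 - m / q) := by
  have hq : 0 < q := hm.trans_le hmq
  have hθ : 0 ≤ 1 - m / q := sub_nonneg.2 (div_le_one_of_le₀ hmq hq.le)
  refine le_trans (lintegral_mono_ae ?_) (ENNReal.lintegral_mul_norm_pow_le (hf.pow_const q) hw
    (by positivity) hθ (add_sub_cancel _ _))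
  filter_upwards [hw1] with x hx
  rw [← ENNReal.rpow_mul, mul_div_cancel₀ _ hq.ne']
  gcongr
  calc w x = w x ^ (1 : ℝ) := (ENNReal.rpow_one _).symm
    _ ≤ w x ^ (1 - m / q) :=
      ENNReal.rpow_le_rpow_of_exponent_ge hx (sub_le_self _ (by positivity))

lemma setLIntegral_le_sqrt_measure_mul_sqrt_lintegral_sq {f : α → ℝ≥0∞} (hf : AEMeasurable f μ)
    (s : Set α) :
    ∫⁻ x in s, f x ∂μ ≤ μ s ^ (1 / 2 : ℝ) * (∫⁻ x in s, f x ^ 2 ∂μ) ^ (1 / 2 : ℝ) := by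
  have h := ENNReal.lintegral_mul_le_Lp_mul_Lq (μ.restrict s) Real.HolderConjugate.two_two
    (f := fun _ => 1) aemeasurable_const hf.restrict
  simpa using h

end Lebesgue

section Young

variable {G : Type*} [AddCommGroup G] [MeasurableSpace G] [MeasurableAdd₂ G] [MeasurableNeg G]
  {μ : Measure G} [μ.IsAddLeftInvariant]

section

variable [μ.IsNegInvariant]

lemma lintegral_comp_neg_add (f : G → ℝ≥0∞) (x : G) : ∫⁻ y, f (-y + x) ∂μ = ∫⁻ y, f y ∂μ := by
  rw [lintegral_neg_eq_self (f := fun y => f (y + x)), lintegral_add_right_eq_self]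

variable {k f : G → ℝ≥0∞} {p q a : ℝ}

lemma lconvolution_le_holder (hk : Measurable k) (hf : Measurable f) (hp : 0 < p) (ha : 0 < a)
    (hq : 0 < q) (hpq : p ≤ q) (haq : a ≤ q) (hpaq : p⁻¹ + a⁻¹ = 1 + q⁻¹) (x : G) :
    (k ⋆ₗ[μ] f) x ≤ (∫⁻ y, k y ^ a * f (-y + x) ^ p ∂μ) ^ q⁻¹ *
      (∫⁻ y, k y ^ a ∂μ) ^ (a⁻¹ - q⁻¹) * (∫⁻ y, f y ^ p ∂μ) ^ (p⁻¹ - q⁻¹) := by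
  have hp_inv : q⁻¹ ≤ p⁻¹ := inv_anti₀ hp hpq
  have ha_inv : q⁻¹ ≤ a⁻¹ := inv_anti₀ ha haq
  have rpow_split (c : ℝ≥0∞) {s : ℝ} (hs : 0 < s) (hqs : q⁻¹ ≤ s⁻¹) :
      (c ^ s) ^ q⁻¹ * (c ^ s) ^ (s⁻¹ - q⁻¹) = c := by
    rw [← ENNReal.rpow_add_of_nonneg _ _ (by positivity) (by linarith), add_sub_cancel,
      ENNReal.rpow_rpow_inv hs.ne']
  have factor (y : G) : k y * f (-y + x) = (k y ^ a * f (-y + x) ^ p) ^ q⁻¹ *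
      (k y ^ a) ^ (a⁻¹ - q⁻¹) * (f (-y + x) ^ p) ^ (p⁻¹ - q⁻¹) := by
    rw [ENNReal.mul_rpow_of_nonneg _ _ (by positivity), mul_assoc, mul_mul_mul_comm,
      rpow_split _ ha ha_inv, rpow_split _ hp hp_inv]
  have holder := ENNReal.lintegral_prod_norm_pow_le (μ := μ) (Finset.univ : Finset (Fin 3))
    (f := ![fun y => k y ^ a * f (-y + x) ^ p, fun y => k y ^ a, fun y => f (-y + x) ^ p])
    (p := ![q⁻¹, a⁻¹ - q⁻¹, p⁻¹ - q⁻¹])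
    (by
      intro i _
      fin_cases i <;>
        simp only [Fin.zero_eta, Fin.mk_one, Fin.reduceFinMk, Matrix.cons_val] <;> fun_prop)
    (by simp [Fin.sum_univ_three]; linarith)
    (by intro i _; fin_cases i <;> simp <;> linarith)
  simp only [Fin.prod_univ_three, Matrix.cons_val] at holder
  rw [lintegral_comp_neg_add (fun y => f y ^ p) x] at holder
  rw [lconvolution_def]
  simpa only [factor] using holder

lemma lconvolution_rpow_le (hk : Measurable k) (hf : Measurable f) (hp : 0 < p) (ha : 0 < a)
    (hq : 0 < q) (hpq : p ≤ q) (haq : a ≤ q) (hpaq : p⁻¹ + a⁻¹ = 1 + q⁻¹) (x : G) :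
    (k ⋆ₗ[μ] f) x ^ q ≤ ((fun y => k y ^ a) ⋆ₗ[μ] (fun y => f y ^ p)) x *
      ((∫⁻ y, k y ^ a ∂μ) ^ (q / a - 1) * (∫⁻ y, f y ^ p ∂μ) ^ (q / p - 1)) := by
  refine (ENNReal.rpow_le_rpow (lconvolution_le_holder hk hf hp ha hq hpq haq hpaq x)
    hq.le).trans_eq ?_
  rw [ENNReal.mul_rpow_of_nonneg _ _ hq.le, ENNReal.mul_rpow_of_nonneg _ _ hq.le, mul_assoc,
    ENNReal.rpow_inv_rpow hq.ne', ← ENNReal.rpow_mul, ← ENNReal.rpow_mul, lconvolution_def]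
  congr 3 <;> field_simp

end

variable {k f : G → ℝ≥0∞} {p q a : ℝ} [SFinite μ]

lemma lintegral_lconvolution (hk : Measurable k) (hf : Measurable f) :
    ∫⁻ x, (k ⋆ₗ[μ] f) x ∂μ = (∫⁻ y, k y ∂μ) * ∫⁻ y, f y ∂μ := by
  have inner (y : G) : ∫⁻ x, k y * f (-y + x) ∂μ = k y * ∫⁻ x, f x ∂μ := by
    rw [lintegral_const_mul _ (by fun_prop), lintegral_add_left_eq_self f]
  simp only [lconvolution_def]
  rw [lintegral_lintegral_swap (by fun_prop)]
  simp only [inner, lintegral_mul_const _ hk]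

theorem lintegral_lconvolution_rpow_le [μ.IsNegInvariant] (hk : Measurable k) (hf : Measurable f)
    (hp : 1 ≤ p) (hpq : p ≤ q) (ha : p⁻¹ + a⁻¹ = 1 + q⁻¹) :
    ∫⁻ x, (k ⋆ₗ[μ] f) x ^ q ∂μ ≤
      (∫⁻ y, k y ^ a ∂μ) ^ (q / a) * (∫⁻ y, f y ^ p ∂μ) ^ (q / p) := by
  have hp0 : 0 < p := by linarith
  have hq0 : 0 < q := by linarith
  have ha0 : 0 < a := inv_pos.1 (by linarith [inv_pos.2 hq0, inv_le_one_of_one_le₀ hp])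
  have haq : a ≤ q := (inv_le_inv₀ hq0 ha0).1 (by linarith [inv_le_one_of_one_le₀ hp])
  have mul_rpow : ∀ (c : ℝ≥0∞) {s : ℝ}, 0 < s → s ≤ q → c * c ^ (q / s - 1) = c ^ (q / s) :=
    fun c s hs hsq => by
      have : 0 ≤ q / s - 1 := sub_nonneg.2 ((one_le_div hs).2 hsq)
      simpa using (ENNReal.rpow_add_of_nonneg (x := c) _ _ zero_le_one this).symm
  calc ∫⁻ x, (k ⋆ₗ[μ] f) x ^ q ∂μ
      ≤ ∫⁻ x, ((fun y => k y ^ a) ⋆ₗ[μ] (fun y => f y ^ p)) x *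
          ((∫⁻ y, k y ^ a ∂μ) ^ (q / a - 1) * (∫⁻ y, f y ^ p ∂μ) ^ (q / p - 1)) ∂μ :=
        lintegral_mono (lconvolution_rpow_le hk hf hp0 ha0 hq0 hpq haq ha)
    _ = (∫⁻ y, k y ^ a ∂μ) * (∫⁻ y, f y ^ p ∂μ) *
          ((∫⁻ y, k y ^ a ∂μ) ^ (q / a - 1) * (∫⁻ y, f y ^ p ∂μ) ^ (q / p - 1)) := by
        rw [lintegral_mul_const _ (measurable_lconvolution μ (by fun_prop) (by fun_prop)),
          lintegral_lconvolution (by fun_prop) (by fun_prop)]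
    _ = _ := by rw [mul_mul_mul_comm, mul_rpow _ ha0 haq, mul_rpow _ hp0 hpq]

end Young

section ComplexFubini

@[fun_prop]
lemma measurable_complex_mk {α : Type*} [MeasurableSpace α] {x y : α → ℝ} (hx : Measurable x)
    (hy : Measurable y) : Measurable fun i => (⟨x i, y i⟩ : ℂ) :=
  Complex.measurableEquivRealProd.symm.measurable.comp (hx.prodMk hy)

lemma setLIntegral_reProdIm {S T : Set ℝ} (hS : MeasurableSet S) (hT : MeasurableSet T)
    {F : ℂ → ℝ≥0∞} (hF : Measurable F) :
    ∫⁻ z in S ×ℂ T, F z = ∫⁻ s in S, ∫⁻ t in T, F ⟨s, t⟩ := by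
  have hsymm := Complex.volume_preserving_equiv_real_prod.symm
  have hST : MeasurableSet (S ×ℂ T) := (Complex.measurable_re hS).inter (Complex.measurable_im hT)
  rw [← hsymm.setLIntegral_comp_preimage hST hF, Measure.volume_eq_prod]
  exact setLIntegral_prod _ (hF.comp hsymm.measurable).aemeasurable

lemma lintegral_complex {F : ℂ → ℝ≥0∞} (hF : Measurable F) :
    ∫⁻ z, F z = ∫⁻ s : ℝ, ∫⁻ t : ℝ, F ⟨s, t⟩ := by
  simpa [Complex.reProdIm] using setLIntegral_reProdIm .univ .univ hF

lemma setLIntegral_Ioo_mul_left {s : ℝ} (hs : 0 < s) (L : ℝ) (g : ℝ → ℝ≥0∞) :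
    ∫⁻ t in Ioo (-(L * s)) (L * s), g t = ENNReal.ofReal s * ∫⁻ t in Ioo (-L) L, g (s * t) := by
  have himage : (s * ·) '' Ioo (-L) L = Ioo (-(L * s)) (L * s) := by
    simp [image_mul_left_Ioo hs, mul_comm]
  have hderiv (t : ℝ) : HasDerivAt (s * ·) s t := by simpa using (hasDerivAt_id t).const_mul s
  rw [← himage, lintegral_image_eq_lintegral_abs_deriv_mul measurableSet_Ioo
    (fun t _ => (hderiv t).hasDerivWithinAt) (mul_right_injective₀ hs.ne').injOn, abs_of_pos hs,
    lintegral_const_mul' _ _ ENNReal.ofReal_ne_top]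

end ComplexFubini

section ConeKernel

/-- The kernel `1 / re w` on the truncated cone `{0 < re w < 1, |im w| < L * re w}`. Convolution
with it averages a function over the segments that leave a point `z` leftwards with slope less
than `L` and end on the line `re = re z - 1`. -/
def coneKernel (L : ℝ) : ℂ → ℝ≥0∞ :=
  {w : ℂ | w.re ∈ Ioo 0 1 ∧ |w.im| < L * w.re}.indicator fun w => (ENNReal.ofReal w.re)⁻¹

variable {L a : ℝ}

lemma measurable_coneKernel : Measurable (coneKernel L) := by
  refine Measurable.indicator (by fun_prop) (MeasurableSet.inter ?_ ?_)
  · exact measurableSet_Ioo.preimage Complex.measurable_re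
  · exact measurableSet_lt Complex.measurable_im.norm (Complex.measurable_re.const_mul L)

lemma lintegral_coneKernel_mul {F : ℂ → ℝ≥0∞} (hF : Measurable F) :
    ∫⁻ w, coneKernel L w * F w =
      ∫⁻ s in Ioo (0 : ℝ) 1, ∫⁻ t in Ioo (-L) L, F (s * (1 + t * Complex.I)) := by
  rw [lintegral_complex (F := fun w => coneKernel L w * F w) (measurable_coneKernel.mul hF),
    ← lintegral_indicator measurableSet_Ioo]
  congr with s
  by_cases hs : s ∈ Ioo (0 : ℝ) 1
  · have hs0 : ENNReal.ofReal s ≠ 0 := (ENNReal.ofReal_pos.2 hs.1).ne'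
    have slice (t : ℝ) : coneKernel L ⟨s, t⟩ * F ⟨s, t⟩ = (Ioo (-(L * s)) (L * s)).indicator
        (fun t => (ENNReal.ofReal s)⁻¹ * F ⟨s, t⟩) t := by
      by_cases ht : |t| < L * s
      · simp [coneKernel, hs.1, hs.2, ht, abs_lt.1 ht]
      · simp [coneKernel, ht, mt abs_lt.2 ht]
    simp_rw [slice]
    rw [lintegral_indicator measurableSet_Ioo, setLIntegral_Ioo_mul_left hs.1,
      lintegral_const_mul' _ _ (ENNReal.inv_ne_top.2 hs0), ← mul_assoc,
      ENNReal.mul_inv_cancel hs0 ENNReal.ofReal_ne_top, one_mul, indicator_of_mem hs]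
    congr with t
    congr 1
    apply Complex.ext <;> simp
  · have hslice (t : ℝ) : coneKernel L ⟨s, t⟩ = 0 := indicator_of_notMem (fun h => hs h.1) _
    simp [hslice, hs]

lemma lintegral_coneKernel_rpow_lt_top (ha0 : 0 < a) (ha2 : a < 2) :
    ∫⁻ w, coneKernel L w ^ a < ∞ := by
  have hpow (w : ℂ) : coneKernel L w ^ a = coneKernel L w * ENNReal.ofReal w.re ^ (1 - a) := by
    by_cases hw : w.re ∈ Ioo 0 1 ∧ |w.im| < L * w.re
    · have hre : ENNReal.ofReal w.re ≠ 0 := (ENNReal.ofReal_pos.2 hw.1.1).ne'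
      simp only [coneKernel, indicator_apply, mem_ofPred_eq, if_pos hw]
      rw [ENNReal.rpow_sub _ _ hre ENNReal.ofReal_ne_top,
        ENNReal.inv_rpow, ENNReal.rpow_one, ENNReal.div_eq_inv_mul, mul_left_comm,
        ENNReal.inv_mul_cancel hre ENNReal.ofReal_ne_top, mul_one]
    · simp only [coneKernel, indicator_apply, mem_ofPred_eq, if_neg hw, zero_mul,
        ENNReal.zero_rpow_of_pos ha0]
  have hint : ∫⁻ s in Ioo (0 : ℝ) 1, ENNReal.ofReal (s ^ (1 - a)) < ∞ :=
    ((intervalIntegral.integrableOn_Ioo_rpow_iff zero_lt_one).2 (by linarith)).lintegral_lt_top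
  simp_rw [hpow]
  rw [lintegral_coneKernel_mul (by fun_prop)]
  have hre (s t : ℝ) : (s * (1 + t * Complex.I) : ℂ).re = s := by simp
  simp_rw [hre, setLIntegral_const]
  rw [lintegral_mul_const _ (by fun_prop)]
  refine ENNReal.mul_lt_top ?_ measure_Ioo_lt_top
  refine hint.trans_eq' (setLIntegral_congr_fun measurableSet_Ioo fun s hs => ?_)
  exact (ENNReal.ofReal_rpow_of_pos hs.1).symm

end ConeKernel

lemma measurable_indicator_enorm {E F : Type*} [TopologicalSpace E] [MeasurableSpace E]
    [BorelSpace E] [NormedAddCommGroup F] {U : Set E}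
    (hU : MeasurableSet U) {u : E → F} (hu : ContinuousOn u U) :
    Measurable (U.indicator fun x => ‖u x‖ₑ) := by
  classical
  rw [← piecewise_eq_indicator]
  exact hu.enorm.measurable_piecewise continuousOn_const hU

section SegmentUpperGradient

variable {E F : Type*} [NormedAddCommGroup E] [NormedSpace ℝ E] [NormedAddCommGroup F]
  [NormedSpace ℝ F]

/-- `f` is an upper gradient of `N` along the segments with endpoints in `U`: the increment of `N`
is at most the integral of `f` along the segment with respect to arc length. -/
def IsSegmentUpperGradientOn (f N : E → ℝ≥0∞) (U : Set E) : Prop :=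
  ∀ x ∈ U, ∀ y ∈ U, N x ≤ N y + ‖y - x‖ₑ * ∫⁻ t in Ioo (0 : ℝ) 1, f (x + t • (y - x))

lemma isSegmentUpperGradientOn_enorm_fderiv {U : Set E} (hU : IsOpen U) (hconv : Convex ℝ U)
    {u : E → F} (hu : ContDiffOn ℝ 1 u U) :
    IsSegmentUpperGradientOn (U.indicator fun x => ‖fderiv ℝ u x‖ₑ)
      (U.indicator fun x => ‖u x‖ₑ) U := by
  intro x hx y hy
  have hseg (t : ℝ) (ht : t ∈ Icc (0 : ℝ) 1) : x + t • (y - x) ∈ U :=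
    hconv.add_smul_sub_mem hx hy ht
  have hline (t : ℝ) : HasDerivAt (fun t : ℝ => x + t • (y - x)) (y - x) t := by
    simpa using ((hasDerivAt_id t).smul_const (y - x)).const_add x
  have hcomp : ContDiffOn ℝ 1 (fun t : ℝ => u (x + t • (y - x))) (Icc 0 1) :=
    hu.comp (by fun_prop) hseg
  have hderiv (t : ℝ) (ht : t ∈ Ioo (0 : ℝ) 1) : ‖deriv (fun t : ℝ => u (x + t • (y - x))) t‖ₑ ≤
      ‖y - x‖ₑ * ‖fderiv ℝ u (x + t • (y - x))‖ₑ := by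
    have hdiff : DifferentiableAt ℝ u (x + t • (y - x)) :=
      (hu.differentiableOn one_ne_zero).differentiableAt
        (hU.mem_nhds (hseg t (Ioo_subset_Icc_self ht)))
    rw [show deriv (fun t : ℝ => u (x + t • (y - x))) t = _ from
      (hdiff.hasFDerivAt.comp_hasDerivAt t (hline t)).deriv, mul_comm]
    exact ContinuousLinearMap.le_opENorm _ _
  have hincr : ‖u y - u x‖ₑ ≤
      ‖y - x‖ₑ * ∫⁻ t in Ioo (0 : ℝ) 1, ‖fderiv ℝ u (x + t • (y - x))‖ₑ := by
    rw [← lintegral_const_mul' _ _ enorm_ne_top]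
    calc ‖u y - u x‖ₑ
        ≤ ∫⁻ t in Icc (0 : ℝ) 1, ‖deriv (fun t : ℝ => u (x + t • (y - x))) t‖ₑ := by
          simpa using enorm_sub_le_lintegral_deriv_of_contDiffOn_Icc hcomp zero_le_one
      _ = ∫⁻ t in Ioo (0 : ℝ) 1, ‖deriv (fun t : ℝ => u (x + t • (y - x))) t‖ₑ := by
          rw [restrict_Ioo_eq_restrict_Icc]
      _ ≤ _ := setLIntegral_mono' measurableSet_Ioo hderiv
  rw [indicator_of_mem hx, indicator_of_mem hy,
    setLIntegral_congr_fun measurableSet_Ioo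
      fun t ht => indicator_of_mem (hseg t (Ioo_subset_Icc_self ht)) _]
  calc ‖u x‖ₑ = ‖u y - (u y - u x)‖ₑ := by rw [sub_sub_cancel]
    _ ≤ ‖u y‖ₑ + ‖u y - u x‖ₑ := enorm_sub_le
    _ ≤ _ := by gcongr

end SegmentUpperGradient

section Strip

/-- The rectangle `(a, b) × (-ℓ, ℓ)` in the complex plane. -/
def rect (a b ℓ : ℝ) : Set ℂ := Ioo a b ×ℂ Ioo (-ℓ) ℓ

variable {a b ℓ : ℝ} {f N : ℂ → ℝ≥0∞}

lemma isOpen_rect : IsOpen (rect a b ℓ) := isOpen_Ioo.reProdIm isOpen_Ioo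

lemma convex_rect : Convex ℝ (rect a b ℓ) :=
  ((convex_Ioo a b).linear_preimage Complex.reLm).inter
    ((convex_Ioo (-ℓ) ℓ).linear_preimage Complex.imLm)

lemma rect_subset_rect {a' b' : ℝ} (ha : a' ≤ a) (hb : b ≤ b') : rect a b ℓ ⊆ rect a' b' ℓ :=
  fun _ hz => ⟨Ioo_subset_Ioo ha hb hz.1, hz.2⟩

lemma volume_rect : volume (rect a b ℓ) = ENNReal.ofReal (b - a) * ENNReal.ofReal (2 * ℓ) := by
  rw [← setLIntegral_one, rect, setLIntegral_reProdIm measurableSet_Ioo measurableSet_Ioo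
    measurable_const]
  simp [← two_mul, mul_comm]

lemma setLIntegral_Ioo_sub_le {c : ℝ} (hc : c ∈ Ioo (-ℓ) ℓ) (g : ℝ → ℝ≥0∞) :
    ∫⁻ φ in Ioo (-ℓ) ℓ, g (c - φ) ≤ ∫⁻ ψ in Ioo (-(2 * ℓ)) (2 * ℓ), g ψ := by
  rw [← lintegral_indicator measurableSet_Ioo, ← lintegral_indicator measurableSet_Ioo,
    ← lintegral_sub_left_eq_self ((Ioo (-(2 * ℓ)) (2 * ℓ)).indicator g) c]
  refine lintegral_mono (indicator_le fun φ hφ => ?_)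
  rw [indicator_of_mem (show c - φ ∈ Ioo (-(2 * ℓ)) (2 * ℓ) from
    ⟨by linarith [hc.1, hφ.2], by linarith [hc.2, hφ.1]⟩)]

/-- Averaging the upper gradient inequality over the segments from `z` to the slice one unit to the
left of it. -/
lemma mul_le_slice_add_lconvolution (hN : Measurable N) (hf : Measurable f)
    (h : IsSegmentUpperGradientOn f N (rect 0 b ℓ)) {z : ℂ} (hz : z ∈ rect 1 b ℓ) :
    ENNReal.ofReal (2 * ℓ) * N z ≤ (∫⁻ φ in Ioo (-ℓ) ℓ, N ⟨z.re - 1, φ⟩) +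
      ENNReal.ofReal (1 + 2 * ℓ) * (coneKernel (2 * ℓ) ⋆ₗ[volume] f) z := by
  obtain ⟨⟨hz1, hzb⟩, hzim⟩ := hz
  let J (ψ : ℝ) : ℝ≥0∞ := ∫⁻ t in Ioo (0 : ℝ) 1, f (-(t * (1 + ψ * Complex.I)) + z)
  have hsegment (φ : ℝ) (hφ : φ ∈ Ioo (-ℓ) ℓ) :
      N z ≤ N ⟨z.re - 1, φ⟩ + ENNReal.ofReal (1 + 2 * ℓ) * J (z.im - φ) := by
    have hdiff : (⟨z.re - 1, φ⟩ : ℂ) - z = -(1 + (z.im - φ : ℝ) * Complex.I) := by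
      apply Complex.ext <;> simp
    have hlength : ‖(⟨z.re - 1, φ⟩ : ℂ) - z‖ₑ ≤ ENNReal.ofReal (1 + 2 * ℓ) := by
      rw [← ofReal_norm, hdiff, norm_neg]
      refine ENNReal.ofReal_le_ofReal ((norm_add_le _ _).trans ?_)
      have : |z.im - φ| ≤ 2 * ℓ :=
        abs_le.2 ⟨by linarith [hzim.1, hφ.2], by linarith [hzim.2, hφ.1]⟩
      rw [norm_one, norm_mul, Complex.norm_I, mul_one, Complex.norm_real, Real.norm_eq_abs]
      linarith
    refine (h z ⟨⟨by linarith, hzb⟩, hzim⟩ ⟨z.re - 1, φ⟩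
      ⟨⟨by simpa using hz1, by simp; linarith⟩, hφ⟩).trans ?_
    gcongr
    simp only [J, hdiff, smul_neg, add_comm z, Complex.real_smul, le_refl]
  have hconv : ∫⁻ ψ in Ioo (-(2 * ℓ)) (2 * ℓ), J ψ = (coneKernel (2 * ℓ) ⋆ₗ[volume] f) z := by
    rw [lconvolution_def, lintegral_coneKernel_mul (F := fun w => f (-w + z)) (by fun_prop),
      lintegral_lintegral_swap (by fun_prop)]
  calc ENNReal.ofReal (2 * ℓ) * N z = ∫⁻ _ in Ioo (-ℓ) ℓ, N z := by
        simp [← two_mul, mul_comm]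
    _ ≤ ∫⁻ φ in Ioo (-ℓ) ℓ, (N ⟨z.re - 1, φ⟩ + ENNReal.ofReal (1 + 2 * ℓ) * J (z.im - φ)) :=
        setLIntegral_mono' measurableSet_Ioo hsegment
    _ = (∫⁻ φ in Ioo (-ℓ) ℓ, N ⟨z.re - 1, φ⟩) +
          ENNReal.ofReal (1 + 2 * ℓ) * ∫⁻ φ in Ioo (-ℓ) ℓ, J (z.im - φ) := by
        rw [lintegral_add_left (by fun_prop),
          lintegral_const_mul' _ _ ENNReal.ofReal_ne_top]
    _ ≤ _ := by
        gcongr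
        exact (setLIntegral_Ioo_sub_le hzim J).trans_eq hconv

lemma enorm_mul_setLIntegral_segment_le {I : Set ℝ} (hI : Convex ℝ I) {x y : ℝ} (hx : x ∈ I)
    (hy : y ∈ I) (g : ℝ → ℝ≥0∞) :
    ‖y - x‖ₑ * ∫⁻ t in Ioo (0 : ℝ) 1, g (x + t * (y - x)) ≤ ∫⁻ τ in I, g τ := by
  rcases eq_or_ne y x with rfl | hxy
  · simp
  have hderiv (t : ℝ) : HasDerivAt (fun t : ℝ => x + t * (y - x)) (y - x) t := by
    simpa using ((hasDerivAt_id t).mul_const (y - x)).const_add x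
  have hinj : InjOn (fun t : ℝ => x + t * (y - x)) (Ioo 0 1) := fun s _ t _ hst => by
    simpa [sub_ne_zero.2 hxy] using hst
  have himage : (fun t : ℝ => x + t * (y - x)) '' Ioo 0 1 ⊆ I := by
    rintro _ ⟨t, ht, rfl⟩
    exact hI.add_smul_sub_mem hx hy (Ioo_subset_Icc_self ht)
  calc ‖y - x‖ₑ * ∫⁻ t in Ioo (0 : ℝ) 1, g (x + t * (y - x))
      = ∫⁻ τ in (fun t : ℝ => x + t * (y - x)) '' Ioo 0 1, g τ := by
        rw [lintegral_image_eq_lintegral_abs_deriv_mul measurableSet_Ioo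
          (fun t _ => (hderiv t).hasDerivWithinAt) hinj,
          lintegral_const_mul' _ _ ENNReal.ofReal_ne_top, ← Real.enorm_eq_ofReal_abs]
    _ ≤ ∫⁻ τ in I, g τ := lintegral_mono_set himage

lemma setLIntegral_slice_le (hN : Measurable N) (hf : Measurable f) (hb : 1 ≤ b)
    (h : IsSegmentUpperGradientOn f N (rect 0 b ℓ)) {σ : ℝ} (hσ : σ ∈ Ioo 0 b) :
    ∫⁻ φ in Ioo (-ℓ) ℓ, N ⟨σ, φ⟩ ≤ (∫⁻ z in rect 0 1 ℓ, N z) + ∫⁻ z in rect 0 (σ + 1) ℓ, f z := by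
  have hpoint (s : ℝ) (hs : s ∈ Ioo (0 : ℝ) 1) (φ : ℝ) (hφ : φ ∈ Ioo (-ℓ) ℓ) :
      N ⟨σ, φ⟩ ≤ N ⟨s, φ⟩ + ∫⁻ τ in Ioo 0 (σ + 1), f ⟨τ, φ⟩ := by
    have hdiff : (⟨s, φ⟩ : ℂ) - ⟨σ, φ⟩ = (s - σ : ℝ) := by apply Complex.ext <;> simp
    have hpath (t : ℝ) : (⟨σ, φ⟩ : ℂ) + t • ((s - σ : ℝ) : ℂ) = ⟨σ + t * (s - σ), φ⟩ := by
      apply Complex.ext <;> simp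
    refine (h ⟨σ, φ⟩ ⟨hσ, hφ⟩ ⟨s, φ⟩ ⟨⟨hs.1, hs.2.trans_le hb⟩, hφ⟩).trans ?_
    simp only [hdiff, hpath]
    gcongr
    rw [← ofReal_norm, Complex.norm_real, ofReal_norm]
    exact enorm_mul_setLIntegral_segment_le (convex_Ioo 0 (σ + 1))
      ⟨hσ.1, by linarith⟩ ⟨hs.1, by linarith [hs.2, hσ.1]⟩ fun τ => f ⟨τ, φ⟩
  have hslice (s : ℝ) (hs : s ∈ Ioo (0 : ℝ) 1) : ∫⁻ φ in Ioo (-ℓ) ℓ, N ⟨σ, φ⟩ ≤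
      (∫⁻ φ in Ioo (-ℓ) ℓ, N ⟨s, φ⟩) + ∫⁻ z in rect 0 (σ + 1) ℓ, f z := by
    rw [rect, setLIntegral_reProdIm measurableSet_Ioo measurableSet_Ioo hf,
      lintegral_lintegral_swap (by fun_prop), ← lintegral_add_left (by fun_prop)]
    exact setLIntegral_mono' measurableSet_Ioo (hpoint s hs)
  calc ∫⁻ φ in Ioo (-ℓ) ℓ, N ⟨σ, φ⟩ = ∫⁻ _ in Ioo (0 : ℝ) 1, ∫⁻ φ in Ioo (-ℓ) ℓ, N ⟨σ, φ⟩ := by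
        simp
    _ ≤ ∫⁻ s in Ioo (0 : ℝ) 1,
          ((∫⁻ φ in Ioo (-ℓ) ℓ, N ⟨s, φ⟩) + ∫⁻ z in rect 0 (σ + 1) ℓ, f z) :=
        setLIntegral_mono' measurableSet_Ioo hslice
    _ = _ := by
        rw [lintegral_add_right _ measurable_const, rect, rect,
          setLIntegral_reProdIm measurableSet_Ioo measurableSet_Ioo hN]
        simp

lemma setLIntegral_slice_le_sqrt (hN : Measurable N) (hf : Measurable f) (hb : 1 ≤ b)
    (h : IsSegmentUpperGradientOn f N (rect 0 b ℓ)) {σ : ℝ} (hσ : σ ∈ Ioo 0 b) :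
    ∫⁻ φ in Ioo (-ℓ) ℓ, N ⟨σ, φ⟩ ≤ 2 * (ENNReal.ofReal (σ + 1) * ENNReal.ofReal (2 * ℓ) *
      ((∫⁻ z in rect 0 1 ℓ, N z ^ 2) + ∫⁻ z, f z ^ 2)) ^ (1 / 2 : ℝ) := by
  have cauchySchwarz {τ : ℝ} (hτ : τ ≤ σ + 1) {g : ℂ → ℝ≥0∞} (hg : Measurable g)
      (hgle : ∫⁻ z in rect 0 τ ℓ, g z ^ 2 ≤ (∫⁻ z in rect 0 1 ℓ, N z ^ 2) + ∫⁻ z, f z ^ 2) :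
      ∫⁻ z in rect 0 τ ℓ, g z ≤ (ENNReal.ofReal (σ + 1) * ENNReal.ofReal (2 * ℓ) *
        ((∫⁻ z in rect 0 1 ℓ, N z ^ 2) + ∫⁻ z, f z ^ 2)) ^ (1 / 2 : ℝ) := by
    refine (setLIntegral_le_sqrt_measure_mul_sqrt_lintegral_sq hg.aemeasurable _).trans ?_
    rw [← ENNReal.mul_rpow_of_nonneg _ _ (by positivity), volume_rect, sub_zero]
    gcongr
  refine (setLIntegral_slice_le hN hf hb h hσ).trans ?_
  rw [two_mul]
  exact add_le_add (cauchySchwarz (by linarith [hσ.1]) hN le_self_add)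
    (cauchySchwarz le_rfl hf ((setLIntegral_le_lintegral _ _).trans le_add_self))

lemma exists_le_sqrt_re_add_lconvolution (hℓ : 0 < ℓ) :
    ∃ C : ℝ≥0∞, C ≠ ∞ ∧ ∀ (b : ℝ) (f N : ℂ → ℝ≥0∞), Measurable f → Measurable N →
      IsSegmentUpperGradientOn f N (rect 0 b ℓ) → ∀ z ∈ rect 1 b ℓ, N z ≤ C *
        (ENNReal.ofReal z.re ^ (1 / 2 : ℝ) *
          ((∫⁻ z in rect 0 1 ℓ, N z ^ 2) + ∫⁻ z, f z ^ 2) ^ (1 / 2 : ℝ) +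
        (coneKernel (2 * ℓ) ⋆ₗ[volume] f) z) := by
  have hℓ0 : ENNReal.ofReal (2 * ℓ) ≠ 0 := (ENNReal.ofReal_pos.2 (by positivity)).ne'
  refine ⟨(ENNReal.ofReal (2 * ℓ))⁻¹ *
    (2 * ENNReal.ofReal (2 * ℓ) ^ (1 / 2 : ℝ) + ENNReal.ofReal (1 + 2 * ℓ)), by finiteness, ?_⟩
  intro b f N hf hN h z hz
  have hslice := setLIntegral_slice_le_sqrt hN hf (hz.1.1.trans hz.1.2).le h
    (σ := z.re - 1) ⟨by linarith [hz.1.1], by linarith [hz.1.2]⟩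
  rw [sub_add_cancel, mul_comm (ENNReal.ofReal z.re), mul_assoc,
    ENNReal.mul_rpow_of_nonneg _ _ (by positivity),
    ENNReal.mul_rpow_of_nonneg (ENNReal.ofReal z.re) _ (by positivity)] at hslice
  rw [← ENNReal.mul_le_mul_iff_right hℓ0 ENNReal.ofReal_ne_top, mul_assoc _ _ (_ + _),
    ← mul_assoc _ _⁻¹, ENNReal.mul_inv_cancel hℓ0 ENNReal.ofReal_ne_top, one_mul]
  refine (mul_le_slice_add_lconvolution hN hf h hz).trans ?_
  rw [add_mul]
  gcongr
  · refine hslice.trans ?_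
    rw [mul_assoc 2]
    gcongr
    exact le_self_add
  · exact le_add_self

lemma lintegral_ofReal_re_rpow_lt_top {s : ℝ} (hs : s < -1) :
    ∫⁻ z in Ioi 1 ×ℂ Ioo (-ℓ) ℓ, ENNReal.ofReal z.re ^ s < ∞ := by
  have hint : ∫⁻ x in Ioi (1 : ℝ), ENNReal.ofReal (x ^ s) < ∞ :=
    ((integrableOn_Ioi_rpow_iff zero_lt_one).2 hs).lintegral_lt_top
  rw [setLIntegral_reProdIm measurableSet_Ioi measurableSet_Ioo (by fun_prop)]
  simp_rw [setLIntegral_const]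
  rw [lintegral_mul_const _ (by fun_prop)]
  refine ENNReal.mul_lt_top ?_ measure_Ioo_lt_top
  refine hint.trans_eq' (setLIntegral_congr_fun measurableSet_Ioi fun x hx => ?_)
  exact (ENNReal.ofReal_rpow_of_pos (zero_lt_one.trans hx)).symm

/-- Young's inequality applies because the cone kernel lies in `L^a` for all `a < 2`. -/
lemma exists_lintegral_lconvolution_rpow_mul_le {m ζ : ℝ} (hm : 0 < m) (hζ : 1 < ζ) :
    ∃ C : ℝ≥0∞, C ≠ ∞ ∧ ∀ f : ℂ → ℝ≥0∞, Measurable f →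
      ∫⁻ z in Ioi 1 ×ℂ Ioo (-ℓ) ℓ,
        (coneKernel (2 * ℓ) ⋆ₗ[volume] f) z ^ m * ENNReal.ofReal z.re ^ (-ζ) ≤
      C * (∫⁻ z, f z ^ 2) ^ (m / 2) := by
  obtain ⟨q, hmq, hq2⟩ : ∃ q, m ≤ q ∧ 2 ≤ q := ⟨max m 2, le_max_left _ _, le_max_right _ _⟩
  have hq0 : 0 < q := by linarith
  let a := 2 * q / (q + 2)
  have ha0 : 0 < a := by positivity
  have ha2 : a < 2 := (div_lt_iff₀ (by linarith)).2 (by linarith)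
  have hexp : (2 : ℝ)⁻¹ + a⁻¹ = 1 + q⁻¹ := by simp only [a]; field_simp; ring
  have hθ : 0 ≤ 1 - m / q := sub_nonneg.2 (div_le_one_of_le₀ hmq hq0.le)
  refine ⟨(∫⁻ w, coneKernel (2 * ℓ) w ^ a) ^ (m / a) *
    (∫⁻ z in Ioi 1 ×ℂ Ioo (-ℓ) ℓ, ENNReal.ofReal z.re ^ (-ζ)) ^ (1 - m / q),
    ENNReal.mul_ne_top
      (ENNReal.rpow_ne_top_of_nonneg (by positivity) (lintegral_coneKernel_rpow_lt_top ha0 ha2).ne)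
      (ENNReal.rpow_ne_top_of_nonneg hθ (lintegral_ofReal_re_rpow_lt_top (by linarith)).ne), ?_⟩
  intro f hf
  have hconv : Measurable (coneKernel (2 * ℓ) ⋆ₗ[volume] f) :=
    measurable_lconvolution volume measurable_coneKernel hf
  have hweight : ∀ᵐ z ∂volume.restrict (Ioi 1 ×ℂ Ioo (-ℓ) ℓ), ENNReal.ofReal z.re ^ (-ζ) ≤ 1 := by
    filter_upwards [ae_restrict_mem (measurableSet_Ioi.preimage Complex.measurable_re |>.inter
      (measurableSet_Ioo.preimage Complex.measurable_im))] with z hz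
    exact ENNReal.rpow_le_one_of_one_le_of_neg (ENNReal.one_le_ofReal.2 (le_of_lt hz.1))
      (by linarith)
  have young : ∫⁻ z, (coneKernel (2 * ℓ) ⋆ₗ[volume] f) z ^ q ≤
      (∫⁻ w, coneKernel (2 * ℓ) w ^ a) ^ (q / a) * (∫⁻ z, f z ^ 2) ^ (q / 2) := by
    simpa using lintegral_lconvolution_rpow_le (μ := volume) (p := 2)
      (measurable_coneKernel (L := 2 * ℓ)) hf one_le_two hq2 hexp
  refine (lintegral_rpow_mul_le hconv.aemeasurable (by fun_prop) hweight hm hmq).trans ?_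
  rw [mul_right_comm]
  gcongr
  calc (∫⁻ z in Ioi 1 ×ℂ Ioo (-ℓ) ℓ, (coneKernel (2 * ℓ) ⋆ₗ[volume] f) z ^ q) ^ (m / q)
      ≤ ((∫⁻ w, coneKernel (2 * ℓ) w ^ a) ^ (q / a) * (∫⁻ z, f z ^ 2) ^ (q / 2)) ^ (m / q) := by
        gcongr
        exact (setLIntegral_le_lintegral _ _).trans young
    _ = _ := by
        rw [ENNReal.mul_rpow_of_nonneg _ _ (by positivity), ← ENNReal.rpow_mul, ← ENNReal.rpow_mul]
        congr 2 <;> field_simp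

lemma rpow_mul_rpow_le_of_le_sqrt_mul_sqrt_add {A x T k n : ℝ≥0∞} {m ζ : ℝ} (hm : 0 ≤ m)
    (hx0 : x ≠ 0) (hx : x ≠ ∞) (hn : n ≤ A * (x ^ (1 / 2 : ℝ) * T ^ (1 / 2 : ℝ) + k)) :
    n ^ m * x ^ (-ζ) ≤ A ^ m * 2 ^ m * (x ^ (m / 2 - ζ) * T ^ (m / 2) + k ^ m * x ^ (-ζ)) := by
  calc n ^ m * x ^ (-ζ)
      ≤ A ^ m * (x ^ (1 / 2 : ℝ) * T ^ (1 / 2 : ℝ) + k) ^ m * x ^ (-ζ) := by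
        rw [← ENNReal.mul_rpow_of_nonneg _ _ hm]
        gcongr
    _ ≤ A ^ m * (2 ^ m * ((x ^ (1 / 2 : ℝ) * T ^ (1 / 2 : ℝ)) ^ m + k ^ m)) * x ^ (-ζ) := by
        gcongr
        exact add_rpow_le_two_rpow_mul _ _ hm
    _ = _ := by
        rw [ENNReal.mul_rpow_of_nonneg _ _ hm, ← ENNReal.rpow_mul, ← ENNReal.rpow_mul,
          one_div_mul_eq_div, sub_eq_add_neg, ENNReal.rpow_add _ _ hx0 hx]
        ring

theorem exists_setLIntegral_rect_rpow_le_of_isSegmentUpperGradientOn {m ζ : ℝ} (hm : 0 < m)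
    (hζ : 1 + m / 2 < ζ) (hℓ : 0 < ℓ) :
    ∃ C : ℝ≥0∞, C ≠ ∞ ∧ ∀ (b : ℝ) (f N : ℂ → ℝ≥0∞), Measurable f → Measurable N →
      IsSegmentUpperGradientOn f N (rect 0 b ℓ) →
      ∫⁻ z in rect 1 b ℓ, N z ^ m * ENNReal.ofReal z.re ^ (-ζ) ≤
        C * ((∫⁻ z in rect 0 1 ℓ, N z ^ 2) + ∫⁻ z, f z ^ 2) ^ (m / 2) := by
  obtain ⟨A, hA, hpoint⟩ := exists_le_sqrt_re_add_lconvolution hℓ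
  obtain ⟨B, hB, hconv⟩ := exists_lintegral_lconvolution_rpow_mul_le (ℓ := ℓ) hm
    (show 1 < ζ by linarith)
  let W := ∫⁻ z in Ioi 1 ×ℂ Ioo (-ℓ) ℓ, ENNReal.ofReal z.re ^ (m / 2 - ζ)
  have hW : W ≠ ∞ := (lintegral_ofReal_re_rpow_lt_top (by linarith)).ne
  refine ⟨A ^ m * 2 ^ m * (W + B), by finiteness, fun b f N hf hN h => ?_⟩
  let T := (∫⁻ z in rect 0 1 ℓ, N z ^ 2) + ∫⁻ z, f z ^ 2
  have hbound (z : ℂ) (hz : z ∈ rect 1 b ℓ) : N z ^ m * ENNReal.ofReal z.re ^ (-ζ) ≤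
      A ^ m * 2 ^ m * (ENNReal.ofReal z.re ^ (m / 2 - ζ) * T ^ (m / 2) +
        (coneKernel (2 * ℓ) ⋆ₗ[volume] f) z ^ m * ENNReal.ofReal z.re ^ (-ζ)) :=
    rpow_mul_rpow_le_of_le_sqrt_mul_sqrt_add hm.le
      (ENNReal.ofReal_pos.2 (zero_lt_one.trans hz.1.1)).ne' ENNReal.ofReal_ne_top
      (hpoint b f N hf hN h z hz)
  have hsubset : rect 1 b ℓ ⊆ Ioi 1 ×ℂ Ioo (-ℓ) ℓ := fun z hz => ⟨hz.1.1, hz.2⟩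
  calc ∫⁻ z in rect 1 b ℓ, N z ^ m * ENNReal.ofReal z.re ^ (-ζ)
      ≤ ∫⁻ z in Ioi 1 ×ℂ Ioo (-ℓ) ℓ,
          A ^ m * 2 ^ m * (ENNReal.ofReal z.re ^ (m / 2 - ζ) * T ^ (m / 2) +
            (coneKernel (2 * ℓ) ⋆ₗ[volume] f) z ^ m * ENNReal.ofReal z.re ^ (-ζ)) :=
        (setLIntegral_mono' isOpen_rect.measurableSet hbound).trans (lintegral_mono_set hsubset)
    _ = A ^ m * 2 ^ m * (W * T ^ (m / 2) + ∫⁻ z in Ioi 1 ×ℂ Ioo (-ℓ) ℓ,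
          (coneKernel (2 * ℓ) ⋆ₗ[volume] f) z ^ m * ENNReal.ofReal z.re ^ (-ζ)) := by
        rw [lintegral_const_mul' _ _ (by finiteness), lintegral_add_left (by fun_prop),
          lintegral_mul_const _ (by fun_prop)]
    _ ≤ A ^ m * 2 ^ m * (W * T ^ (m / 2) + B * T ^ (m / 2)) := by
        gcongr
        refine (hconv f hf).trans ?_
        gcongr
        exact le_add_self
    _ = _ := by ring

end Strip

section Conformal

variable (F : Type*) [NormedAddCommGroup F] [NormedSpace ℝ F]

theorem exists_setLIntegral_rect_enorm_rpow_le {m ζ ℓ : ℝ} (hm : 0 < m) (hζ : 1 + m / 2 < ζ)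
    (hℓ : 0 < ℓ) :
    ∃ C : ℝ≥0∞, C ≠ ∞ ∧ ∀ (b : ℝ) (u : ℂ → F), ContDiffOn ℝ 1 u (rect 0 b ℓ) →
      ∫⁻ z in rect 1 b ℓ, ‖u z‖ₑ ^ m * ENNReal.ofReal z.re ^ (-ζ) ≤
        C * ((∫⁻ z in rect 0 1 ℓ, ‖u z‖ₑ ^ 2) +
          ∫⁻ z in rect 0 b ℓ, ‖fderiv ℝ u z‖ₑ ^ 2) ^ (m / 2) := by
  obtain ⟨C, hC, hbound⟩ := exists_setLIntegral_rect_rpow_le_of_isSegmentUpperGradientOn hm hζ hℓ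
  refine ⟨C, hC, fun b u hu => ?_⟩
  have hΩ : IsOpen (rect 0 b ℓ) := isOpen_rect
  have hgrad : ∫⁻ z, (rect 0 b ℓ).indicator (fun w => ‖fderiv ℝ u w‖ₑ) z ^ 2 =
      ∫⁻ z in rect 0 b ℓ, ‖fderiv ℝ u z‖ₑ ^ 2 := by
    rw [← lintegral_indicator hΩ.measurableSet]
    congr with z
    by_cases hz : z ∈ rect 0 b ℓ <;> simp [hz]
  calc ∫⁻ z in rect 1 b ℓ, ‖u z‖ₑ ^ m * ENNReal.ofReal z.re ^ (-ζ)
      = ∫⁻ z in rect 1 b ℓ, (rect 0 b ℓ).indicator (fun w => ‖u w‖ₑ) z ^ m *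
          ENNReal.ofReal z.re ^ (-ζ) :=
        setLIntegral_congr_fun isOpen_rect.measurableSet fun z hz => by
          rw [indicator_of_mem (rect_subset_rect zero_le_one le_rfl hz)]
    _ ≤ C * ((∫⁻ z in rect 0 1 ℓ, (rect 0 b ℓ).indicator (fun w => ‖u w‖ₑ) z ^ 2) +
          ∫⁻ z, (rect 0 b ℓ).indicator (fun w => ‖fderiv ℝ u w‖ₑ) z ^ 2) ^ (m / 2) :=
        hbound b _ _
          (measurable_indicator_enorm hΩ.measurableSet (hu.continuousOn_fderiv_of_isOpen hΩ le_rfl))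
          (measurable_indicator_enorm hΩ.measurableSet hu.continuousOn)
          (isSegmentUpperGradientOn_enorm_fderiv hΩ convex_rect hu)
    _ ≤ _ := by
        rw [hgrad]
        gcongr with z
        exact indicator_le_self _ _ z

variable {F} {Φ Φ' : ℂ → ℂ} {Ω U : Set ℂ}

lemma setLIntegral_image_eq_enorm_deriv_sq_mul (hΩ : MeasurableSet Ω)
    (hΦ : ∀ w ∈ Ω, HasDerivAt Φ (Φ' w) w) (hinj : InjOn Φ Ω) (G : ℂ → ℝ≥0∞) :
    ∫⁻ z in Φ '' Ω, G z = ∫⁻ w in Ω, ‖Φ' w‖ₑ ^ 2 * G (Φ w) := by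
  rw [lintegral_image_eq_lintegral_abs_det_fderiv_mul volume hΩ
    (fun w hw => ((hΦ w hw).hasFDerivAt.restrictScalars ℝ).hasFDerivWithinAt) hinj G]
  congr with w
  have hdet : ((ContinuousLinearMap.toSpanSingleton ℂ (Φ' w)).restrictScalars ℝ).det =
      ‖Φ' w‖ ^ 2 := by
    simp [ContinuousLinearMap.det, LinearMap.det_restrictScalars, Algebra.norm_complex_eq,
      Complex.normSq_eq_norm_sq]
  rw [hdet, abs_of_nonneg (by positivity), ENNReal.ofReal_pow (norm_nonneg _), ofReal_norm]

lemma setLIntegral_enorm_fderiv_comp_sq_le (hΩ : MeasurableSet Ω)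
    (hΦ : ∀ w ∈ Ω, HasDerivAt Φ (Φ' w) w) (hinj : InjOn Φ Ω) (hmaps : MapsTo Φ Ω U) {v : ℂ → F}
    (hv : ∀ z ∈ U, DifferentiableAt ℝ v z) :
    ∫⁻ w in Ω, ‖fderiv ℝ (v ∘ Φ) w‖ₑ ^ 2 ≤ ∫⁻ z in U, ‖fderiv ℝ v z‖ₑ ^ 2 := by
  calc ∫⁻ w in Ω, ‖fderiv ℝ (v ∘ Φ) w‖ₑ ^ 2
      ≤ ∫⁻ w in Ω, ‖Φ' w‖ₑ ^ 2 * ‖fderiv ℝ v (Φ w)‖ₑ ^ 2 := by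
        refine setLIntegral_mono' hΩ fun w hw => ?_
        have hcomp := (hv _ (hmaps hw)).hasFDerivAt.comp w
          ((hΦ w hw).hasFDerivAt.restrictScalars ℝ)
        rw [hcomp.fderiv, ← mul_pow, mul_comm]
        gcongr
        refine (ContinuousLinearMap.opENorm_comp_le _ _).trans_eq ?_
        congr 1
        rw [← ofReal_norm, ContinuousLinearMap.norm_restrictScalars,
          ContinuousLinearMap.norm_toSpanSingleton, ofReal_norm]
    _ = ∫⁻ z in Φ '' Ω, ‖fderiv ℝ v z‖ₑ ^ 2 :=
        (setLIntegral_image_eq_enorm_deriv_sq_mul hΩ hΦ hinj fun z => ‖fderiv ℝ v z‖ₑ ^ 2).symm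
    _ ≤ ∫⁻ z in U, ‖fderiv ℝ v z‖ₑ ^ 2 := lintegral_mono_set hmaps.image_subset

/-- `Φ`, with derivative `Φ'`, is a conformal embedding of the rectangle `rect 0 b ℓ` into `U` that
sends the unit cell `rect 0 1 ℓ` into `V`. -/
structure IsStripChart (Φ Φ' : ℂ → ℂ) (b ℓ : ℝ) (U V : Set ℂ) : Prop where
  hasDerivAt : ∀ w ∈ rect 0 b ℓ, HasDerivAt Φ (Φ' w) w
  injOn : InjOn Φ (rect 0 b ℓ)
  mapsTo : MapsTo Φ (rect 0 b ℓ) U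
  mapsTo_cell : MapsTo Φ (rect 0 1 ℓ) V

variable {V : Set ℂ}

lemma IsStripChart.setLIntegral_cell_le {b ℓ : ℝ} (hΦ : IsStripChart Φ Φ' b ℓ U V) (hb : 1 ≤ b)
    {k : ℝ≥0∞} (hk : k ≠ ∞) (hΦ' : ∀ w ∈ rect 0 1 ℓ, 1 ≤ k * ‖Φ' w‖ₑ ^ 2) (G : ℂ → ℝ≥0∞) :
    ∫⁻ w in rect 0 1 ℓ, G (Φ w) ≤ k * ∫⁻ z in V, G z := by
  have hcell : rect 0 1 ℓ ⊆ rect 0 b ℓ := rect_subset_rect le_rfl hb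
  calc ∫⁻ w in rect 0 1 ℓ, G (Φ w)
      ≤ ∫⁻ w in rect 0 1 ℓ, k * (‖Φ' w‖ₑ ^ 2 * G (Φ w)) :=
        setLIntegral_mono' isOpen_rect.measurableSet fun w hw => by
          rw [← mul_assoc]
          exact le_mul_of_one_le_left' (hΦ' w hw)
    _ = k * ∫⁻ z in Φ '' rect 0 1 ℓ, G z := by
        rw [lintegral_const_mul' _ _ hk, setLIntegral_image_eq_enorm_deriv_sq_mul
          isOpen_rect.measurableSet (fun w hw => hΦ.hasDerivAt w (hcell hw)) (hΦ.injOn.mono hcell)]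
    _ ≤ k * ∫⁻ z in V, G z := by
        gcongr
        exact hΦ.mapsTo_cell.image_subset

variable (F) in
theorem exists_setLIntegral_image_enorm_rpow_le {m ζ ℓ : ℝ} (hm : 0 < m) (hζ : 1 + m / 2 < ζ)
    (hℓ : 0 < ℓ) {k K : ℝ≥0∞} (hk : k ≠ ∞) (hK : K ≠ ∞) :
    ∃ C : ℝ≥0∞, C ≠ ∞ ∧ ∀ (b : ℝ) (Φ Φ' : ℂ → ℂ) (U V : Set ℂ) (ω : ℂ → ℝ≥0∞) (v : ℂ → F),
      IsStripChart Φ Φ' b ℓ U V → 1 ≤ b → IsOpen U →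
      (∀ w ∈ rect 0 1 ℓ, 1 ≤ k * ‖Φ' w‖ₑ ^ 2) →
      (∀ w ∈ rect 1 b ℓ, ‖Φ' w‖ₑ ^ 2 * ω (Φ w) ≤ K * ENNReal.ofReal w.re ^ (-ζ)) →
      ContDiffOn ℝ 1 v U →
      ∫⁻ z in Φ '' rect 1 b ℓ, ‖v z‖ₑ ^ m * ω z ≤
        C * ((∫⁻ z in V, ‖v z‖ₑ ^ 2) + ∫⁻ z in U, ‖fderiv ℝ v z‖ₑ ^ 2) ^ (m / 2) := by
  obtain ⟨C, hC, hstrip⟩ := exists_setLIntegral_rect_enorm_rpow_le F hm hζ hℓ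
  refine ⟨K * (C * (k + 1) ^ (m / 2)), by finiteness, ?_⟩
  intro b Φ Φ' U V ω v hΦ hb hU hcell hω hv
  have hsub : rect 1 b ℓ ⊆ rect 0 b ℓ := rect_subset_rect zero_le_one le_rfl
  have hholo : DifferentiableOn ℂ Φ (rect 0 b ℓ) :=
    fun w hw => (hΦ.hasDerivAt w hw).differentiableAt.differentiableWithinAt
  have hsmooth : ContDiffOn ℝ 1 (v ∘ Φ) (rect 0 b ℓ) :=
    hv.comp ((hholo.contDiffOn isOpen_rect).restrict_scalars ℝ) hΦ.mapsTo
  have hpoint (w : ℂ) (hw : w ∈ rect 1 b ℓ) : ‖Φ' w‖ₑ ^ 2 * (‖v (Φ w)‖ₑ ^ m * ω (Φ w)) ≤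
      K * (‖(v ∘ Φ) w‖ₑ ^ m * ENNReal.ofReal w.re ^ (-ζ)) := by
    rw [mul_left_comm, mul_left_comm K]
    exact mul_le_mul_right (hω w hw) _
  have henergy : (∫⁻ w in rect 0 1 ℓ, ‖(v ∘ Φ) w‖ₑ ^ 2) +
      ∫⁻ w in rect 0 b ℓ, ‖fderiv ℝ (v ∘ Φ) w‖ₑ ^ 2 ≤
      (k + 1) * ((∫⁻ z in V, ‖v z‖ₑ ^ 2) + ∫⁻ z in U, ‖fderiv ℝ v z‖ₑ ^ 2) := by
    rw [mul_add]
    refine add_le_add ((hΦ.setLIntegral_cell_le hb hk hcell fun z => ‖v z‖ₑ ^ 2).trans ?_)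
      ((setLIntegral_enorm_fderiv_comp_sq_le isOpen_rect.measurableSet hΦ.hasDerivAt hΦ.injOn
        hΦ.mapsTo fun z hz => (hv.differentiableOn one_ne_zero).differentiableAt
          (hU.mem_nhds hz)).trans ?_)
    · gcongr; exact le_self_add
    · exact le_mul_of_one_le_left' le_add_self
  calc ∫⁻ z in Φ '' rect 1 b ℓ, ‖v z‖ₑ ^ m * ω z
      = ∫⁻ w in rect 1 b ℓ, ‖Φ' w‖ₑ ^ 2 * (‖v (Φ w)‖ₑ ^ m * ω (Φ w)) :=
        setLIntegral_image_eq_enorm_deriv_sq_mul isOpen_rect.measurableSet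
          (fun w hw => hΦ.hasDerivAt w (hsub hw)) (hΦ.injOn.mono hsub) _
    _ ≤ K * ∫⁻ w in rect 1 b ℓ, ‖(v ∘ Φ) w‖ₑ ^ m * ENNReal.ofReal w.re ^ (-ζ) := by
        rw [← lintegral_const_mul' _ _ hK]
        exact setLIntegral_mono' isOpen_rect.measurableSet hpoint
    _ ≤ K * (C * ((k + 1) *
          ((∫⁻ z in V, ‖v z‖ₑ ^ 2) + ∫⁻ z in U, ‖fderiv ℝ v z‖ₑ ^ 2)) ^ (m / 2)) := by
        gcongr
        refine (hstrip b _ hsmooth).trans ?_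
        gcongr
    _ = _ := by rw [ENNReal.mul_rpow_of_nonneg _ _ (by positivity)]; ring

end Conformal

section LogWeight

/-- The radial weight `(e + ρ²)⁻¹ (log (e + ρ²))^(-ζ)`. -/
def logWeight (ζ ρ : ℝ) : ℝ :=
  (exp 1 + ρ ^ 2)⁻¹ * log (exp 1 + ρ ^ 2) ^ (-ζ)

lemma one_le_log_exp_one_add_sq (ρ : ℝ) : 1 ≤ log (exp 1 + ρ ^ 2) := by
  rw [le_log_iff_exp_le (by positivity)]
  exact le_add_of_nonneg_right (sq_nonneg ρ)

lemma logWeight_pos (ζ ρ : ℝ) : 0 < logWeight ζ ρ := by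
  have := one_le_log_exp_one_add_sq ρ
  unfold logWeight
  positivity

lemma logWeight_le_logWeight {ζ ρ σ : ℝ} (hζ : 0 ≤ ζ) (hρ : 0 ≤ ρ) (hρσ : ρ ≤ σ) :
    logWeight ζ σ ≤ logWeight ζ ρ := by
  have := one_le_log_exp_one_add_sq ρ
  have hsq : exp 1 + ρ ^ 2 ≤ exp 1 + σ ^ 2 := by gcongr
  exact mul_le_mul (inv_anti₀ (by positivity) hsq)
    (rpow_le_rpow_of_nonpos (by positivity) (log_le_log (by positivity) hsq) (by linarith))
    (by have := one_le_log_exp_one_add_sq σ; positivity) (by positivity)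

lemma sq_mul_logWeight_le {ζ a ρ s B : ℝ} (hζ : 0 ≤ ζ) (ha : a ^ 2 ≤ exp 1 + ρ ^ 2)
    (hs : 0 < s) (hB : 0 < B) (hsB : s ≤ B * log (exp 1 + ρ ^ 2)) :
    a ^ 2 * logWeight ζ ρ ≤ B ^ ζ * s ^ (-ζ) := by
  have hlog : log (exp 1 + ρ ^ 2) ^ (-ζ) ≤ (s / B) ^ (-ζ) :=
    rpow_le_rpow_of_nonpos (by positivity) (by rwa [div_le_iff₀' hB]) (by linarith)
  have hfrac : a ^ 2 * (exp 1 + ρ ^ 2)⁻¹ ≤ 1 :=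
    mul_inv_le_one_of_le₀ ha (by positivity)
  calc a ^ 2 * logWeight ζ ρ
      = a ^ 2 * (exp 1 + ρ ^ 2)⁻¹ * log (exp 1 + ρ ^ 2) ^ (-ζ) := (mul_assoc _ _ _).symm
    _ ≤ 1 * (s / B) ^ (-ζ) := by
        have := one_le_log_exp_one_add_sq ρ
        gcongr
    _ = B ^ ζ * s ^ (-ζ) := by
        rw [one_mul, div_rpow hs.le hB.le, rpow_neg hB.le, div_inv_eq_mul, mul_comm]

lemma enorm_sq_mul_ofReal_logWeight_le {ζ ρ s B : ℝ} {c : ℂ} (hζ : 0 ≤ ζ)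
    (hc : ‖c‖ ^ 2 ≤ exp 1 + ρ ^ 2) (hs : 0 < s) (hB : 0 < B)
    (hsB : s ≤ B * log (exp 1 + ρ ^ 2)) :
    ‖c‖ₑ ^ 2 * ENNReal.ofReal (logWeight ζ ρ) ≤
      ENNReal.ofReal (B ^ ζ) * ENNReal.ofReal s ^ (-ζ) := by
  rw [← ofReal_norm, ← ENNReal.ofReal_pow (norm_nonneg _), ← ENNReal.ofReal_mul (by positivity),
    ENNReal.ofReal_rpow_of_pos hs, ← ENNReal.ofReal_mul (by positivity)]
  exact ENNReal.ofReal_le_ofReal (sq_mul_logWeight_le hζ hc hs hB hsB)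

end LogWeight

section BallCover

lemma norm_cexp_sub_four (w : ℂ) : ‖Complex.exp (w - 4)‖ = exp (w.re - 4) := by
  simp [Complex.norm_exp]

lemma one_le_mul_enorm_cexp_sub_four_sq {w : ℂ} (hw : 0 < w.re) :
    1 ≤ ENNReal.ofReal (exp 4 ^ 2) * ‖Complex.exp (w - 4)‖ₑ ^ 2 := by
  rw [← ofReal_norm, norm_cexp_sub_four, ← ENNReal.ofReal_pow (exp_pos _).le,
    ← ENNReal.ofReal_mul (by positivity), ← mul_pow, ← exp_add, ENNReal.one_le_ofReal]
  exact one_le_pow₀ (one_le_exp (by linarith))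

/-- The shift is chosen so that the image of `rect 1 (4 + log r) π`, which is
`{e⁻³ < |z| < r}` off the negative axis, meets the image of `rect 1 2 1` under `(w - 3 / 2) / 4`,
which contains `{|z| < 1 / 8}`. -/
lemma isStripChart_cexp_sub_four {r : ℝ} (hr : 0 < r) :
    IsStripChart (fun w => Complex.exp (w - 4)) (fun w => Complex.exp (w - 4)) (4 + log r) π
      (ball 0 r) (ball 0 (1 / 2)) where
  hasDerivAt w _ := by simpa using ((hasDerivAt_id w).sub_const (4 : ℂ)).cexp
  injOn := by
    have hlog (w : ℂ) (hw : w ∈ rect 0 (4 + log r) π) :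
        Complex.log (Complex.exp (w - 4)) = w - 4 :=
      Complex.log_exp (by simpa using hw.2.1) (by simpa using hw.2.2.le)
    intro w hw z hz hwz
    simpa [hlog w hw, hlog z hz] using congrArg Complex.log hwz
  mapsTo w hw := by
    rw [mem_ball_zero_iff, norm_cexp_sub_four, ← lt_log_iff_exp_lt hr]
    linarith [hw.1.2]
  mapsTo_cell w hw := by
    rw [mem_ball_zero_iff, norm_cexp_sub_four]
    calc exp (w.re - 4) < exp (-1) := exp_lt_exp.2 (by linarith [hw.1.2])
      _ < 1 / 2 := exp_neg_one_lt_half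

lemma enorm_sq_mul_logWeight_norm_cexp_le {ζ : ℝ} (hζ : 0 ≤ ζ) {w : ℂ} (hw : 0 < w.re) :
    ‖Complex.exp (w - 4)‖ₑ ^ 2 * ENNReal.ofReal (logWeight ζ ‖Complex.exp (w - 4)‖) ≤
      ENNReal.ofReal (5 ^ ζ) * ENNReal.ofReal w.re ^ (-ζ) := by
  set ρ := ‖Complex.exp (w - 4)‖ with hρ
  have hlog : 2 * (w.re - 4) ≤ log (exp 1 + ρ ^ 2) := by
    rw [le_log_iff_exp_le (by positivity), hρ, norm_cexp_sub_four, ← exp_nat_mul]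
    exact le_add_of_nonneg_left (exp_pos 1).le
  refine enorm_sq_mul_ofReal_logWeight_le hζ (le_add_of_nonneg_left (exp_pos 1).le) hw
    (by norm_num) ?_
  linarith [one_le_log_exp_one_add_sq ρ]

lemma norm_sub_three_halves_div_four_lt {w : ℂ} (hw : w ∈ rect 0 2 1) :
    ‖(w - 3 / 2) / 4‖ < 1 / 2 := by
  obtain ⟨⟨hre, hre'⟩, him, him'⟩ := hw
  have hsq : ‖w - 3 / 2‖ ^ 2 < 2 ^ 2 := by
    rw [← Complex.normSq_eq_norm_sq, Complex.normSq_apply]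
    simp only [Complex.sub_re, Complex.sub_im, Complex.div_ofNat_re, Complex.div_ofNat_im,
      Complex.re_ofNat, Complex.im_ofNat, zero_div, sub_zero]
    nlinarith
  have := lt_of_pow_lt_pow_left₀ 2 zero_le_two hsq
  rw [norm_div, Complex.norm_ofNat]
  linarith

lemma isStripChart_sub_three_halves_div_four {r : ℝ} (hr : 1 / 2 ≤ r) :
    IsStripChart (fun w => (w - 3 / 2) / 4) (fun _ => 1 / 4) 2 1 (ball 0 r) (ball 0 (1 / 2)) where
  hasDerivAt w _ := ((hasDerivAt_id w).sub_const (3 / 2 : ℂ)).div_const 4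
  injOn w _ z _ hwz := by simpa using hwz
  mapsTo w hw := by
    rw [mem_ball_zero_iff]
    exact (norm_sub_three_halves_div_four_lt hw).trans_le hr
  mapsTo_cell w hw := by
    rw [mem_ball_zero_iff]
    exact norm_sub_three_halves_div_four_lt (rect_subset_rect le_rfl one_le_two hw)

lemma enorm_quarter_sq_mul_logWeight_le {ζ ρ s : ℝ} (hζ : 0 ≤ ζ) (hs : 0 < s) (hs' : s ≤ 2) :
    ‖(1 / 4 : ℂ)‖ₑ ^ 2 * ENNReal.ofReal (logWeight ζ ρ) ≤
      ENNReal.ofReal (5 ^ ζ) * ENNReal.ofReal s ^ (-ζ) := by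
  refine enorm_sq_mul_ofReal_logWeight_le hζ ?_ hs (by norm_num) ?_
  · have : ‖(1 / 4 : ℂ)‖ = 1 / 4 := by simp
    rw [this]
    nlinarith [add_one_le_exp 1, sq_nonneg ρ]
  · linarith [one_le_log_exp_one_add_sq ρ]

lemma volume_compl_slitPlane : volume Complex.slitPlaneᶜ = 0 :=
  ae_eq_univ.1 <| Complex.volume_preserving_equiv_real_prod.quasiMeasurePreserving.preimage_ae_eq
    polarCoord_source_ae_eq_univ

lemma ball_subset_slitPlane_compl_union_images {r : ℝ} :
    ball (0 : ℂ) r ⊆ Complex.slitPlaneᶜ ∪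
      ((fun w => Complex.exp (w - 4)) '' rect 1 (4 + log r) π ∪
        (fun w => (w - 3 / 2) / 4) '' rect 1 2 1) := by
  intro z hz
  rw [mem_ball_zero_iff] at hz
  by_cases hslit : z ∈ Complex.slitPlane
  swap
  · exact .inl hslit
  right
  have hz0 : 0 < ‖z‖ := norm_pos_iff.2 (Complex.slitPlane_ne_zero hslit)
  rcases lt_or_ge ‖z‖ (1 / 8) with hsmall | hlarge
  · right
    have hre := abs_lt.1 ((Complex.abs_re_le_norm z).trans_lt hsmall)
    have him := abs_lt.1 ((Complex.abs_im_le_norm z).trans_lt hsmall)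
    refine ⟨4 * z + 3 / 2, ⟨⟨?_, ?_⟩, ?_, ?_⟩, by ring⟩ <;> norm_num <;> linarith
  · left
    have hlog : -3 < log ‖z‖ := by
      rw [lt_log_iff_exp_lt hz0]
      calc exp (-3) = exp (-1) ^ 3 := by rw [← exp_nat_mul]; norm_num
        _ < (1 / 2) ^ 3 := by gcongr; exact exp_neg_one_lt_half
        _ = 1 / 8 := by norm_num
        _ ≤ ‖z‖ := hlarge
    have hlog' : log ‖z‖ < log r := log_lt_log hz0 hz
    have harg : z.arg < π :=
      (Complex.arg_le_pi z).lt_of_ne (Complex.mem_slitPlane_iff_arg.1 hslit).1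
    refine ⟨Complex.log z + 4, ⟨⟨?_, ?_⟩, ?_, ?_⟩, ?_⟩
    · simp only [Complex.add_re, Complex.log_re, Complex.re_ofNat]; linarith
    · simp only [Complex.add_re, Complex.log_re, Complex.re_ofNat]; linarith
    · simpa [Complex.log_im] using Complex.neg_pi_lt_arg z
    · simpa [Complex.log_im] using harg
    · simpa using Complex.exp_log (Complex.slitPlane_ne_zero hslit)

end BallCover

section RealIntegrals

variable {F : Type*} [NormedAddCommGroup F]

lemma ofReal_norm_rpow_mul {m : ℝ} (hm : 0 ≤ m) (x : F) (w : ℝ) :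
    ENNReal.ofReal (‖x‖ ^ m * w) = ‖x‖ₑ ^ m * ENNReal.ofReal w := by
  rw [ENNReal.ofReal_mul (by positivity), ← ENNReal.ofReal_rpow_of_nonneg (norm_nonneg x) hm,
    ofReal_norm]

lemma setLIntegral_enorm_sq_eq_ofReal {X : Type*} [MeasurableSpace X] {μ : Measure X} {s : Set X}
    {f : X → F} (hf : IntegrableOn (fun x => ‖f x‖ ^ 2) s μ) :
    ∫⁻ x in s, ‖f x‖ₑ ^ 2 ∂μ = ENNReal.ofReal (∫ x in s, ‖f x‖ ^ 2 ∂μ) := by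
  rw [ofReal_integral_eq_lintegral_ofReal hf (ae_of_all _ fun x => sq_nonneg _)]
  simp only [ENNReal.ofReal_pow (norm_nonneg _), ofReal_norm]

lemma rpow_one_div_le_of_le_mul_add_rpow {m J c a d : ℝ} (hm : 0 < m) (hJ : 0 ≤ J) (hc : 0 ≤ c)
    (ha : 0 ≤ a) (hd : 0 ≤ d) (h : J ≤ c * (a + d) ^ (m / 2)) :
    J ^ (1 / m) ≤ c ^ (1 / m) * (a ^ (1 / 2 : ℝ) + d ^ (1 / 2 : ℝ)) := by
  calc J ^ (1 / m) ≤ (c * (a + d) ^ (m / 2)) ^ (1 / m) := by gcongr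
    _ = c ^ (1 / m) * (a + d) ^ (1 / 2 : ℝ) := by
        rw [mul_rpow hc (by positivity), ← rpow_mul (by positivity)]
        congr 2
        field_simp
    _ ≤ c ^ (1 / m) * (a ^ (1 / 2 : ℝ) + d ^ (1 / 2 : ℝ)) := by
        gcongr
        exact rpow_add_le_add_rpow ha hd (by norm_num) (by norm_num)

end RealIntegrals

section Ball

theorem exists_lintegral_complex_ball_enorm_rpow_mul_logWeight_le (F : Type*)
    [NormedAddCommGroup F] [NormedSpace ℝ F] {m ζ : ℝ} (hm : 0 < m) (hζ : 1 + m / 2 < ζ) :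
    ∃ C : ℝ≥0∞, C ≠ ∞ ∧ ∀ (r : ℝ) (v : ℂ → F), 1 ≤ r → ContDiffOn ℝ 1 v (ball 0 r) →
      ∫⁻ z in ball (0 : ℂ) r, ‖v z‖ₑ ^ m * ENNReal.ofReal (logWeight ζ ‖z‖) ≤
        C * ((∫⁻ z in ball (0 : ℂ) (1 / 2), ‖v z‖ₑ ^ 2) +
          ∫⁻ z in ball (0 : ℂ) r, ‖fderiv ℝ v z‖ₑ ^ 2) ^ (m / 2) := by
  have hζ₀ : 0 ≤ ζ := by linarith
  obtain ⟨C₁, hC₁, hannulus⟩ := exists_setLIntegral_image_enorm_rpow_le F hm hζ pi_pos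
    (k := ENNReal.ofReal (exp 4 ^ 2)) (K := ENNReal.ofReal (5 ^ ζ)) (by finiteness) (by finiteness)
  obtain ⟨C₂, hC₂, hdisc⟩ := exists_setLIntegral_image_enorm_rpow_le F hm hζ zero_lt_one
    (k := 4 ^ 2) (K := ENNReal.ofReal (5 ^ ζ)) (by finiteness) (by finiteness)
  refine ⟨C₁ + C₂, by finiteness, fun r v hr hv => ?_⟩
  have hquarter : (1 : ℝ≥0∞) ≤ 4 ^ 2 * ‖(1 / 4 : ℂ)‖ₑ ^ 2 := by
    rw [← mul_pow, one_div, enorm_inv (by norm_num)]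
    simp [← ofReal_norm, ENNReal.mul_inv_cancel]
  calc ∫⁻ z in ball (0 : ℂ) r, ‖v z‖ₑ ^ m * ENNReal.ofReal (logWeight ζ ‖z‖)
      ≤ ∫⁻ z in Complex.slitPlaneᶜ ∪
          ((fun w => Complex.exp (w - 4)) '' rect 1 (4 + log r) π ∪
            (fun w => (w - 3 / 2) / 4) '' rect 1 2 1),
          ‖v z‖ₑ ^ m * ENNReal.ofReal (logWeight ζ ‖z‖) :=
        lintegral_mono_set ball_subset_slitPlane_compl_union_images
    _ ≤ 0 + (C₁ * _ + C₂ * _) := by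
        refine (lintegral_union_le _ _ _).trans (add_le_add
          (setLIntegral_measure_zero _ _ volume_compl_slitPlane).le
          ((lintegral_union_le _ _ _).trans (add_le_add ?_ ?_)))
        · exact hannulus _ _ _ _ _ (fun z => ENNReal.ofReal (logWeight ζ ‖z‖)) v
            (isStripChart_cexp_sub_four (zero_lt_one.trans_le hr)) (by linarith [log_nonneg hr])
            isOpen_ball (fun w hw => one_le_mul_enorm_cexp_sub_four_sq hw.1.1)
            (fun w hw => enorm_sq_mul_logWeight_norm_cexp_le hζ₀ (zero_lt_one.trans hw.1.1)) hv
        · exact hdisc _ _ _ _ _ (fun z => ENNReal.ofReal (logWeight ζ ‖z‖)) v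
            (isStripChart_sub_three_halves_div_four (by linarith)) one_le_two
            isOpen_ball (fun _ _ => hquarter)
            (fun w hw => enorm_quarter_sq_mul_logWeight_le hζ₀ (zero_lt_one.trans hw.1.1)
              hw.1.2.le) hv
    _ = _ := by rw [zero_add, add_mul]

variable {E F : Type*} [NormedAddCommGroup E] [InnerProductSpace ℝ E] [FiniteDimensional ℝ E]
  [MeasurableSpace E] [BorelSpace E] [NormedAddCommGroup F] [NormedSpace ℝ F]

variable (F) in
theorem exists_lintegral_ball_enorm_rpow_mul_logWeight_le (hE : Module.finrank ℝ E = 2)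
    {m ζ : ℝ} (hm : 0 < m) (hζ : 1 + m / 2 < ζ) :
    ∃ C : ℝ≥0∞, C ≠ ∞ ∧ ∀ (r : ℝ) (v : E → F), 1 ≤ r → ContDiffOn ℝ 1 v (ball 0 r) →
      ∫⁻ x in ball (0 : E) r, ‖v x‖ₑ ^ m * ENNReal.ofReal (logWeight ζ ‖x‖) ≤
        C * ((∫⁻ x in ball (0 : E) (1 / 2), ‖v x‖ₑ ^ 2) +
          ∫⁻ x in ball (0 : E) r, ‖fderivWithin ℝ v (ball 0 r) x‖ₑ ^ 2) ^ (m / 2) := by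
  obtain ⟨C, hC, hbound⟩ := exists_lintegral_complex_ball_enorm_rpow_mul_logWeight_le F hm hζ
  refine ⟨C, hC, fun r v hr hv => ?_⟩
  let e : ℂ ≃ₗᵢ[ℝ] E :=
    Complex.isometryOfOrthonormal ((stdOrthonormalBasis ℝ E).reindex (finCongr hE))
  have hball (ρ : ℝ) : e ⁻¹' ball 0 ρ = ball 0 ρ := by ext z; simp
  have hchange (ρ : ℝ) (G : E → ℝ≥0∞) :
      ∫⁻ x in ball (0 : E) ρ, G x = ∫⁻ z in ball (0 : ℂ) ρ, G (e z) := by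
    rw [← hball ρ, e.measurePreserving.setLIntegral_comp_preimage_emb
      e.toHomeomorph.measurableEmbedding]
  have hmaps : MapsTo e (ball 0 r) (ball 0 r) := (hball r).ge
  have hfderiv : ∫⁻ z in ball (0 : ℂ) r, ‖fderivWithin ℝ v (ball 0 r) (e z)‖ₑ ^ 2 =
      ∫⁻ z in ball (0 : ℂ) r, ‖fderiv ℝ (v ∘ e) z‖ₑ ^ 2 := by
    refine setLIntegral_congr_fun measurableSet_ball fun z hz => ?_
    have hcomp : fderiv ℝ (v ∘ e) z = (fderiv ℝ v (e z)).comp (e : ℂ →L[ℝ] E) :=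
      e.toContinuousLinearEquiv.comp_right_fderiv
    rw [fderivWithin_of_isOpen isOpen_ball (hmaps hz), hcomp, ← ofReal_norm, ← ofReal_norm,
      ContinuousLinearMap.opNorm_comp_linearIsometryEquiv]
  rw [hchange r, hchange (1 / 2), hchange r, hfderiv]
  simpa only [e.norm_map, Function.comp_apply] using
    hbound r (v ∘ e) hr (hv.comp e.contDiff.contDiffOn hmaps)

section Integrability

variable {r : ℝ} {v : E → F}

lemma integrableOn_norm_rpow_mul_logWeight (hE : Module.finrank ℝ E = 2) {m ζ : ℝ} (hm : 0 < m)
    (hζ : 1 + m / 2 < ζ) (hr : 1 ≤ r) (hv : ContDiffOn ℝ 1 v (ball 0 r))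
    (hgrad : IntegrableOn (fun x => ‖fderivWithin ℝ v (ball 0 r) x‖ ^ 2) (ball 0 r)) :
    IntegrableOn (fun x => ‖v x‖ ^ m * logWeight ζ ‖x‖) (ball 0 r) := by
  obtain ⟨C, hC, hbound⟩ := exists_lintegral_ball_enorm_rpow_mul_logWeight_le F hE hm hζ
  have hsq : IntegrableOn (fun x => ‖v x‖ ^ 2) (ball 0 (1 / 2)) :=
    (((hv.continuousOn.mono (closedBall_subset_ball (by linarith))).norm.pow
      2).integrableOn_compact (isCompact_closedBall 0 (1 / 2))).mono_set ball_subset_closedBall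
  have hmeas : Measurable (logWeight ζ) := by unfold logWeight; fun_prop
  refine ⟨((hv.continuousOn.norm.rpow_const fun _ _ => .inr hm.le).aestronglyMeasurable
    measurableSet_ball).mul (hmeas.comp measurable_norm).aestronglyMeasurable, ?_⟩
  rw [hasFiniteIntegral_iff_ofReal
    (ae_of_all _ fun x => mul_nonneg (by positivity) (logWeight_pos ζ _).le)]
  simp only [ofReal_norm_rpow_mul hm.le]
  refine (hbound r v hr hv).trans_lt ?_
  rw [setLIntegral_enorm_sq_eq_ofReal hsq, setLIntegral_enorm_sq_eq_ofReal hgrad]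
  finiteness

lemma integrableOn_norm_sq_ball_one (hE : Module.finrank ℝ E = 2) (hr : 1 ≤ r)
    (hv : ContDiffOn ℝ 1 v (ball 0 r))
    (hgrad : IntegrableOn (fun x => ‖fderivWithin ℝ v (ball 0 r) x‖ ^ 2) (ball 0 r)) :
    IntegrableOn (fun x => ‖v x‖ ^ 2) (ball 0 1) := by
  have hsub : ball (0 : E) 1 ⊆ ball 0 r := ball_subset_ball hr
  have hweighted : IntegrableOn (fun x => ‖v x‖ ^ (2 : ℝ) * logWeight 3 ‖x‖) (ball 0 1) :=
    (integrableOn_norm_rpow_mul_logWeight hE two_pos (by norm_num) hr hv hgrad).mono_set hsub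
  refine (hweighted.const_mul (logWeight 3 1)⁻¹).mono'
    (((hv.continuousOn.mono hsub).norm.pow 2).aestronglyMeasurable measurableSet_ball)
    ((ae_restrict_iff' measurableSet_ball).2 (ae_of_all _ fun x hx => ?_))
  have hweight : logWeight 3 1 ≤ logWeight 3 ‖x‖ :=
    logWeight_le_logWeight (by norm_num) (norm_nonneg x) (mem_ball_zero_iff.1 hx).le
  rw [norm_of_nonneg (sq_nonneg _), rpow_two, ← div_eq_inv_mul, le_div_iff₀ (logWeight_pos 3 1)]
  gcongr

end Integrability

variable (E F) in
theorem weighted_poincare_ball_general (hE : Module.finrank ℝ E = 2) {m ζ : ℝ} (hm : 0 < m)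
    (hζ : 1 + m / 2 < ζ) :
    ∃ C : ℝ, 0 < C ∧ ∀ r : ℝ, 1 ≤ r → ∀ v : E → F, ContDiffOn ℝ 1 v (ball (0 : E) r) →
      IntegrableOn (fun x => ‖fderivWithin ℝ v (ball (0 : E) r) x‖ ^ 2) (ball (0 : E) r) →
      IntegrableOn (fun x => ‖v x‖ ^ m * logWeight ζ ‖x‖) (ball (0 : E) r) ∧
      (∫ x in ball (0 : E) r, ‖v x‖ ^ m * logWeight ζ ‖x‖) ^ (1 / m) ≤
        C * (∫ x in ball (0 : E) 1, ‖v x‖ ^ 2) ^ (1 / 2 : ℝ) +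
        C * (∫ x in ball (0 : E) r,
            ‖fderivWithin ℝ v (ball (0 : E) r) x‖ ^ 2) ^ (1 / 2 : ℝ) := by
  obtain ⟨C, hC, hbound⟩ := exists_lintegral_ball_enorm_rpow_mul_logWeight_le F hE hm hζ
  refine ⟨C.toReal ^ (1 / m) + 1, by positivity, fun r hr v hv hgrad => ?_⟩
  have hint := integrableOn_norm_rpow_mul_logWeight hE hm hζ hr hv hgrad
  have hsq := integrableOn_norm_sq_ball_one hE hr hv hgrad
  refine ⟨hint, ?_⟩
  have hnonneg (x : E) : 0 ≤ ‖v x‖ ^ m * logWeight ζ ‖x‖ :=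
    mul_nonneg (by positivity) (logWeight_pos ζ _).le
  set a := ∫ x in ball (0 : E) 1, ‖v x‖ ^ 2
  set d := ∫ x in ball (0 : E) r, ‖fderivWithin ℝ v (ball (0 : E) r) x‖ ^ 2
  have ha : 0 ≤ a := integral_nonneg fun x => sq_nonneg _
  have hd : 0 ≤ d := integral_nonneg fun x => sq_nonneg _
  have hreal : ∫ x in ball (0 : E) r, ‖v x‖ ^ m * logWeight ζ ‖x‖ ≤
      C.toReal * (a + d) ^ (m / 2) := by
    rw [← ENNReal.ofReal_le_ofReal_iff (by positivity),
      ofReal_integral_eq_lintegral_ofReal hint (ae_of_all _ hnonneg),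
      ENNReal.ofReal_mul ENNReal.toReal_nonneg, ENNReal.ofReal_toReal hC,
      ← ENNReal.ofReal_rpow_of_nonneg (by positivity) (by positivity), ENNReal.ofReal_add ha hd,
      ← setLIntegral_enorm_sq_eq_ofReal hsq, ← setLIntegral_enorm_sq_eq_ofReal hgrad]
    simp only [ofReal_norm_rpow_mul hm.le]
    refine (hbound r v hr hv).trans ?_
    gcongr
    norm_num
  rw [← mul_add]
  refine (rpow_one_div_le_of_le_mul_add_rpow hm (integral_nonneg hnonneg) ENNReal.toReal_nonneg ha
    hd hreal).trans ?_
  gcongr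
  linarith

end Ball

/-- Weighted Poincaré-type inequality on balls B_r, r ≥ 1, with constant independent of r
(Lemma 2.3 of the paper, case Ω = B_r). -/
theorem weighted_poincare_ball (m : ℝ) (hm : 2 ≤ m) (ζ : ℝ) (hζ : 1 + m / 2 < ζ) :
    ∃ C : ℝ, 0 < C ∧ ∀ r : ℝ, 1 ≤ r → ∀ v : E2 → ℝ,
      ContDiffOn ℝ 1 v (ball (0 : E2) r) →
      IntegrableOn (fun x => ‖fderivWithin ℝ v (ball (0 : E2) r) x‖ ^ 2)
        (ball (0 : E2) r) →
      (∫ x in ball (0 : E2) r, |v x| ^ m * (Real.exp 1 + ‖x‖ ^ 2)⁻¹ *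
          (Real.log (Real.exp 1 + ‖x‖ ^ 2)) ^ (-ζ)) ^ (1 / m) ≤
        C * (∫ x in ball (0 : E2) 1, (v x) ^ 2) ^ (1 / 2 : ℝ) +
        C * (∫ x in ball (0 : E2) r,
            ‖fderivWithin ℝ v (ball (0 : E2) r) x‖ ^ 2) ^ (1 / 2 : ℝ) := by
  obtain ⟨C, hC, h⟩ := weighted_poincare_ball_general E2 ℝ finrank_euclideanSpace_fin
    (zero_lt_two.trans_le hm) hζ
  exact ⟨C, hC, fun r hr v hv hgrad => by
    simpa only [logWeight, ← mul_assoc, norm_eq_abs, sq_abs] using (h r hr v hv hgrad).2⟩
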